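/- Suppose 2 ≤ k ≤ n are integers with n even, and f : V(C_n) → {1,...,k} is a k-color weak maximizer of the Wiener index W on C_n. Then W(f) = min{ W(f') : f' a k-color weak maximizer of W on C_n } if and only if type(f) ∈ R^∞({t(n,k)}). -/

import Mathlib

open SimpleGraph Finset

/-- The cycle graph on vertex set `ZMod n`, with an edge between `i` and `i+1` (mod `n`). -/
def cycleGraphZMod (n : ℕ) : SimpleGraph (ZMod n) :=
  SimpleGraph.fromRel (fun u v => v = u + 1)

/-- The Wiener index of a set of vertices: the sum of all pairwise geodesic distances. -/
noncomputable def wienerSet {V : Type*} [Fintype V] [DecidableEq V]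
    (G : SimpleGraph V) (A : Finset V) : ℕ :=
  (∑ p ∈ A.offDiag, G.dist p.1 p.2) / 2

/-- `A` is a maximizer of `W` on `G`. -/
def IsWienerMaximizer {V : Type*} [Fintype V] [DecidableEq V]
    (G : SimpleGraph V) (A : Finset V) : Prop :=
  ∀ B : Finset V, B.card = A.card → wienerSet G B ≤ wienerSet G A

/-- `A ⊆ V(C_n)` is almost good. -/
def AlmostGood (n : ℕ) (A : Finset (ZMod n)) : Prop :=
  A.card = 1 ∨ A.card = n - 1 ∨
    ∃ c₁ c₂ : ((cycleGraphZMod n).induce (↑A : Set (ZMod n))).ConnectedComponent,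
      c₁ ≠ c₂ ∧ (∀ c, c = c₁ ∨ c = c₂) ∧
      (c₁.supp.ncard : ℤ) - (c₂.supp.ncard : ℤ) ≤ 1 ∧
      (c₂.supp.ncard : ℤ) - (c₁.supp.ncard : ℤ) ≤ 1

/-- `A ⊆ V(C_n)` is good: both `A` and its complement are almost good. -/
def GoodSet (n : ℕ) [NeZero n] (A : Finset (ZMod n)) : Prop :=
  AlmostGood n A ∧ AlmostGood n (Finset.univ \ A)

/-- The color class of color `i` for the coloring `f`. -/
def colorClass {V : Type*} [Fintype V] {k : ℕ} (f : V → Fin k) (i : Fin k) : Finset V :=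
  Finset.univ.filter (fun v => f v = i)

/-- The Wiener index of a coloring: the sum of the Wiener indices of its color classes. -/
noncomputable def wienerColoring {V : Type*} [Fintype V] [DecidableEq V] {k : ℕ}
    (G : SimpleGraph V) (f : V → Fin k) : ℕ :=
  ∑ i : Fin k, wienerSet G (colorClass f i)

/-- The type of a coloring, as the multiset of cardinalities of its color classes
(equality of multisets is equality of the nondecreasing rearrangements). -/
def colorType {V : Type*} [Fintype V] {k : ℕ} (f : V → Fin k) : Multiset ℕ :=
  (Finset.univ : Finset (Fin k)).val.map (fun i => (colorClass f i).card)

/-- `f` is a `k`-color weak maximizer of `W` on `G`. -/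
def IsWeakMaximizer {V : Type*} [Fintype V] [DecidableEq V] {k : ℕ}
    (G : SimpleGraph V) (f : V → Fin k) : Prop :=
  Function.Surjective f ∧ ∀ g : V → Fin k, Function.Surjective g →
    colorType g = colorType f → wienerColoring G g ≤ wienerColoring G f

/-- The coloring obtained from `f` by swapping the colors of `u` and `v`. -/
def swapColors {V α : Type*} [DecidableEq V] (f : V → α) (u v : V) : V → α :=
  f ∘ Equiv.swap u v

/-- `f` is a `k`-color local weak maximizer of `W` on `G`. -/
def IsLocalWeakMaximizer {V : Type*} [Fintype V] [DecidableEq V] {k : ℕ}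
    (G : SimpleGraph V) (f : V → Fin k) : Prop :=
  Function.Surjective f ∧ ∀ u v : V, G.Adj u v →
    wienerColoring G (swapColors f u v) ≤ wienerColoring G f

/-- The number of vertices to the left of `u` in the path that get the same color as `u`. -/
def leftCount {n k : ℕ} (f : Fin n → Fin k) (u : Fin n) : ℕ :=
  (Finset.univ.filter (fun w => w < u ∧ f w = f u)).card

/-- The number of vertices to the right of `u` in the path that get the same color as `u`. -/
def rightCount {n k : ℕ} (f : Fin n → Fin k) (u : Fin n) : ℕ :=
  (Finset.univ.filter (fun w => u < w ∧ f w = f u)).card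

/-- The sum of the `j` largest entries of a multiset of naturals. -/
def sumLargest (s : Multiset ℕ) (j : ℕ) : ℕ :=
  (((s.sort (· ≤ ·)).reverse).take j).sum

/-- `x ≺ y` : `x` is majorized by `y`. -/
def MajorizedBy (x y : Multiset ℕ) : Prop :=
  x.card = y.card ∧ x.sum = y.sum ∧ ∀ j, sumLargest x j ≤ sumLargest y j

/-- The reverse Robin Hood transfer `R_{j,j'}` applied to the (sorted) list `t`,
with `j ≤ j'` zero-indexed: subtract `1` from the `j`-th entry and add `1` to the `j'`-th
entry; the result is recorded as a multiset (i.e. up to rearrangement). -/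
def rhTransfer (t : List ℕ) (j j' : ℕ) : Multiset ℕ :=
  ↑((t.set j (t.getD j 0 - 1)).set j' ((t.set j (t.getD j 0 - 1)).getD j' 0 + 1))

/-- `t(n,k)` : the unique nondecreasing `k`-tuple of positive integers summing to `n`
whose entries pairwise differ by at most one, as a multiset. -/
def equitableType (n k : ℕ) : Multiset ℕ :=
  Multiset.replicate (k - n % k) (n / k) + Multiset.replicate (n % k) (n / k + 1)

/-- One step of the operation `R`: `s ∈ R({t})`, i.e. `s = t` or `s` is obtained from `t` by
a reverse Robin Hood transfer between two entries that are equal and even. -/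
def REstep (t s : Multiset ℕ) : Prop :=
  s = t ∨ ∃ m : ℕ, Even m ∧ 2 ≤ t.count m ∧
    s = (t - Multiset.replicate 2 m) + {m - 1, m + 1}

/-- `s ∈ R^∞({t(n,k)})`. -/
def InRInfty (n k : ℕ) (s : Multiset ℕ) : Prop :=
  Relation.ReflTransGen REstep (equitableType n k) s

/-!
The distance of `u` and `v` in `C_n` is the number of half circles `H` that contain `u` but not
`v`, so `2 W(A) = ∑ |A ∩ H| |A \ H|`, the sum running over the `n` half circles `H`. Each term
is at most the quarter square `⌊|A|² / 4⌋`, and for even `n` all of them attain this bound as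
soon as at most one vertex of `A` has its antipode outside `A`. Exchanging vertices turns any
coloring into one whose classes all have this property, so a weak maximizer with class sizes
`m₁, …, m_k` has Wiener index `(n / 2) ∑ ⌊mᵢ² / 4⌋`.

It remains to minimize the sum of quarter squares at fixed `∑ mᵢ = n`. For every integer `p` we
have `⌊m² / 4⌋ = p m - p² + ⌊(m - 2p)² / 4⌋`, and the last term vanishes iff `|m - 2p| ≤ 1`.
Choosing `p` such that this holds for all entries of `t(n,k)` shows that the minimizers are the
types with entries in `{2p - 1, 2p, 2p + 1}`. These are the types reachable from `t(n,k)`: a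
transfer replaces `2p, 2p` by `2p - 1, 2p + 1`, and reversing such transfers leads back to a
type whose entries differ by at most one.
-/

/-! ### Distances in cycles -/

section CycleDistance

variable {n : ℕ}

lemma exists_walk_add_natCast_length_le (u : ZMod n) (j : ℕ) :
    ∃ p : (cycleGraphZMod n).Walk u (u + j), p.length ≤ j := by
  induction j with
  | zero => exact ⟨Walk.nil.copy rfl (by simp), by simp⟩
  | succ j ih =>
    obtain ⟨p, hp⟩ := ih
    have hsucc : u + (j + 1 : ℕ) = u + j + 1 := by push_cast; ring
    rw [hsucc]
    by_cases heq : u + j = u + j + 1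
    · exact ⟨p.copy rfl heq, by simpa using hp.trans j.le_succ⟩
    · have hadj : (cycleGraphZMod n).Adj (u + j) (u + j + 1) :=
        (fromRel_adj _ _ _).2 ⟨heq, Or.inl rfl⟩
      exact ⟨p.concat hadj, by simpa using hp⟩

lemma exists_walk_length_le_natAbs_valMinAbs (u v : ZMod n) :
    ∃ p : (cycleGraphZMod n).Walk u v, p.length ≤ (v - u).valMinAbs.natAbs := by
  have hcoe := ZMod.coe_valMinAbs (v - u)
  rcases Int.natAbs_eq (v - u).valMinAbs with habs | habs
  · rw [habs, Int.cast_natCast] at hcoe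
    obtain ⟨p, hp⟩ := exists_walk_add_natCast_length_le u (v - u).valMinAbs.natAbs
    exact ⟨p.copy rfl (by rw [hcoe]; ring), by simpa using hp⟩
  · rw [habs, Int.cast_neg, Int.cast_natCast] at hcoe
    obtain ⟨p, hp⟩ := exists_walk_add_natCast_length_le v (v - u).valMinAbs.natAbs
    exact ⟨(p.copy rfl (by linear_combination -hcoe)).reverse, by simpa using hp⟩

lemma natAbs_valMinAbs_one_le (n : ℕ) : (1 : ZMod n).valMinAbs.natAbs ≤ 1 := by
  rcases le_or_gt n 1 with hn | hn
  · interval_cases n <;> decide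
  · have hhalf : 1 ≤ n / 2 := by omega
    rw [← Nat.cast_one, ZMod.valMinAbs_natCast_of_le_half hhalf]
    rfl

lemma natAbs_valMinAbs_sub_le_one_of_adj {u v : ZMod n}
    (huv : (cycleGraphZMod n).Adj u v) : (v - u).valMinAbs.natAbs ≤ 1 := by
  rcases ((fromRel_adj _ _ _).1 huv).2 with rfl | rfl
  · simpa using natAbs_valMinAbs_one_le n
  · rw [← ZMod.natAbs_valMinAbs_neg]
    simpa using natAbs_valMinAbs_one_le n

lemma natAbs_valMinAbs_sub_le_length {u v : ZMod n} (p : (cycleGraphZMod n).Walk u v) :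
    (v - u).valMinAbs.natAbs ≤ p.length := by
  induction p with
  | nil => simp
  | @cons u v w huv p ih =>
    calc (w - u).valMinAbs.natAbs
        = ((w - v) + (v - u)).valMinAbs.natAbs := by rw [sub_add_sub_cancel]
      _ ≤ ((w - v).valMinAbs + (v - u).valMinAbs).natAbs := ZMod.natAbs_valMinAbs_add_le _ _
      _ ≤ (w - v).valMinAbs.natAbs + (v - u).valMinAbs.natAbs := Int.natAbs_add_le _ _
      _ ≤ p.length + 1 := add_le_add ih (natAbs_valMinAbs_sub_le_one_of_adj huv)

theorem dist_cycleGraphZMod (u v : ZMod n) :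
    (cycleGraphZMod n).dist u v = (v - u).valMinAbs.natAbs := by
  obtain ⟨p, hp⟩ := exists_walk_length_le_natAbs_valMinAbs u v
  obtain ⟨q, hq⟩ := p.reachable.exists_walk_length_eq_dist
  exact le_antisymm ((dist_le p).trans hp) (hq ▸ natAbs_valMinAbs_sub_le_length q)

variable [NeZero n]

/-- The arc of `⌊n / 2⌋` consecutive vertices of `C_n` that starts at `c`. Each choice of `c` is a
cut of the cycle into two (nearly) equal halves. -/
def halfCircle (c : ZMod n) : Finset (ZMod n) :=
  {v | (v - c).val < n / 2}

lemma mem_halfCircle {c v : ZMod n} :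
    v ∈ halfCircle c ↔ (v - c).val < n / 2 := by
  simp [halfCircle]

lemma mem_and_add_notMem_halfCircle_iff {c u : ZMod n} (d : ZMod n) :
    u ∈ halfCircle c ∧ u + d ∉ halfCircle c ↔
      (u - c).val ∈ Ico (n / 2 - d.val) (min (n / 2) (n - d.val)) := by
  have hd := d.val_lt
  rw [mem_halfCircle, mem_halfCircle, mem_Ico, add_sub_right_comm]
  rcases lt_or_ge ((u - c).val + d.val) n with hlt | hge
  · rw [ZMod.val_add_of_lt hlt]
    omega
  · rw [ZMod.val_add_of_le hge]
    omega

theorem card_separating_halfCircle (u v : ZMod n) :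
    #{c | u ∈ halfCircle c ∧ v ∉ halfCircle c} = (cycleGraphZMod n).dist u v := by
  have hd := (v - u).val_lt
  have hbij : #{c | u ∈ halfCircle c ∧ v ∉ halfCircle c}
      = #(Ico (n / 2 - (v - u).val) (min (n / 2) (n - (v - u).val))) := by
    have hmem (c : ZMod n) := mem_and_add_notMem_halfCircle_iff (c := c) (u := u) (v - u)
    simp only [add_sub_cancel] at hmem
    refine card_nbij' (fun c => (u - c).val) (fun a => u - a) ?_ ?_ ?_ ?_
    · intro c hc
      simpa [hmem] using hc
    · intro a ha
      have ha' : a < n := by have := mem_Ico.1 ha; omega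
      simpa [hmem, ZMod.val_cast_of_lt ha'] using ha
    · intro c _
      simp
    · intro a ha
      have ha' : a < n := by have := mem_Ico.1 ha; omega
      simp [ZMod.val_cast_of_lt ha']
  rw [hbij, Nat.card_Ico, dist_cycleGraphZMod, ZMod.valMinAbs_natAbs_eq_min]
  omega

end CycleDistance

/-! ### Wiener indices of vertex sets -/

lemma two_dvd_sum_offDiag_dist {V : Type*} (G : SimpleGraph V) (A : Finset V) :
    2 ∣ ∑ p ∈ A.offDiag, G.dist p.1 p.2 := by
  classical
  rw [← ZMod.natCast_eq_zero_iff, Nat.cast_sum]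
  refine sum_involution (fun p _ => p.swap) (fun p _ => ?_) (fun p hp _ hswap => ?_)
    (fun p hp => ?_) (fun p _ => p.swap_swap)
  · rw [Prod.fst_swap, Prod.snd_swap, G.dist_comm]
    exact CharTwo.add_self_eq_zero _
  · exact (mem_offDiag.1 hp).2.2 (congrArg Prod.snd hswap)
  · simpa [eq_comm, and_left_comm] using hp

lemma two_mul_wienerSet {V : Type*} [Fintype V] [DecidableEq V] (G : SimpleGraph V)
    (A : Finset V) : 2 * wienerSet G A = ∑ u ∈ A, ∑ v ∈ A, G.dist u v := by
  rw [wienerSet, Nat.mul_div_cancel' (two_dvd_sum_offDiag_dist G A), ← sum_product',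
    ← diag_union_offDiag, sum_union (disjoint_diag_offDiag A)]
  simp [sum_diag]

-- Double counting: `d(u, v)` is the number of cuts with `u` inside and `v` outside.
theorem two_mul_wienerSet_cycleGraphZMod {n : ℕ} [NeZero n] (A : Finset (ZMod n)) :
    2 * wienerSet (cycleGraphZMod n) A = ∑ c, #(A ∩ halfCircle c) * #(A \ halfCircle c) := by
  have hcut (c : ZMod n) : #(A ∩ halfCircle c) * #(A \ halfCircle c)
      = ∑ u ∈ A, ∑ v ∈ A, if u ∈ halfCircle c ∧ v ∉ halfCircle c then 1 else 0 := by
    rw [← card_product, ← sum_product' (f := fun u v =>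
      if u ∈ halfCircle c ∧ v ∉ halfCircle c then 1 else 0), ← card_filter]
    congr 1
    ext
    simp only [mem_product, mem_inter, mem_sdiff, mem_filter]
    tauto
  simp only [two_mul_wienerSet, ← card_separating_halfCircle, card_filter, hcut]
  exact sum_comm_cycle

lemma mul_le_sq_add_div_four (a b : ℕ) : a * b ≤ (a + b) ^ 2 / 4 := by
  rw [Nat.le_div_iff_mul_le four_pos]
  linarith [four_mul_le_sq_add a b]

lemma mul_eq_sq_add_div_four {a b : ℕ} (hab : a ≤ b + 1) (hba : b ≤ a + 1) :
    a * b = (a + b) ^ 2 / 4 := by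
  obtain rfl | rfl | rfl : a = b ∨ a = b + 1 ∨ b = a + 1 := by omega
  all_goals
    ring_nf
    omega

theorem two_mul_wienerSet_cycleGraphZMod_le {n : ℕ} [NeZero n] (A : Finset (ZMod n)) :
    2 * wienerSet (cycleGraphZMod n) A ≤ n * (#A ^ 2 / 4) := by
  calc 2 * wienerSet (cycleGraphZMod n) A
      = ∑ c, #(A ∩ halfCircle c) * #(A \ halfCircle c) := two_mul_wienerSet_cycleGraphZMod A
    _ ≤ ∑ _c : ZMod n, #A ^ 2 / 4 := sum_le_sum fun c _ => by
      simpa only [card_inter_add_card_sdiff] using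
        mul_le_sq_add_div_four #(A ∩ halfCircle c) #(A \ halfCircle c)
    _ = n * (#A ^ 2 / 4) := by simp

/-- The vertex of `C_n` opposite to `v`, when `n` is even. -/
def antipode {n : ℕ} (v : ZMod n) : ZMod n :=
  v + (n / 2 : ℕ)

lemma antipode_involutive {n : ℕ} (hn : Even n) : Function.Involutive (antipode (n := n)) := by
  intro v
  have hhalf : ((n / 2 + n / 2 : ℕ) : ZMod n) = 0 := by
    rw [← two_mul, Nat.two_mul_div_two_of_even hn, ZMod.natCast_self]
  rw [antipode, antipode, add_assoc, ← Nat.cast_add, hhalf, add_zero]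

lemma antipode_mem_halfCircle_iff {n : ℕ} [NeZero n] (hn : Even n) {c v : ZMod n} :
    antipode v ∈ halfCircle c ↔ v ∉ halfCircle c := by
  have hv := (v - c).val_lt
  have hhalf : ((n / 2 : ℕ) : ZMod n).val = n / 2 := ZMod.val_cast_of_lt (by omega)
  rw [mem_halfCircle, mem_halfCircle, antipode, add_sub_right_comm]
  obtain ⟨h, hh⟩ := hn
  rcases lt_or_ge ((v - c).val + ((n / 2 : ℕ) : ZMod n).val) n with hlt | hge
  · rw [ZMod.val_add_of_lt hlt]
    omega
  · rw [ZMod.val_add_of_le hge]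
    omega

lemma card_inter_le_card_sdiff_add {V : Type*} [DecidableEq V] {σ : V → V}
    (hσ : Function.Injective σ) (A : Finset V) {H : Finset V} (hH : ∀ v ∈ H, σ v ∉ H) :
    #(A ∩ H) ≤ #(A \ H) + #{v ∈ A | σ v ∉ A} := by
  have hpaired : #{v ∈ A ∩ H | σ v ∈ A} ≤ #(A \ H) :=
    card_le_card_of_injOn σ (fun v hv => by simp_all) hσ.injOn
  have hunpaired : #{v ∈ A ∩ H | σ v ∉ A} ≤ #{v ∈ A | σ v ∉ A} :=
    card_le_card (filter_subset_filter _ inter_subset_left)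
  rw [← card_filter_add_card_filter_not (s := A ∩ H) (σ · ∈ A)]
  exact add_le_add hpaired hunpaired

theorem two_mul_wienerSet_eq_of_card_unpaired_le_one {n : ℕ} [NeZero n] (hn : Even n)
    {A : Finset (ZMod n)} (hA : #{v ∈ A | antipode v ∉ A} ≤ 1) :
    2 * wienerSet (cycleGraphZMod n) A = n * (#A ^ 2 / 4) := by
  have hinj := (antipode_involutive hn).injective
  have hcut (c : ZMod n) : #(A ∩ halfCircle c) * #(A \ halfCircle c) = #A ^ 2 / 4 := by
    have hinside : #(A ∩ halfCircle c) ≤ #(A \ halfCircle c) + 1 :=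
      (card_inter_le_card_sdiff_add hinj A fun v hv => by
        rwa [antipode_mem_halfCircle_iff hn, not_not]).trans (by gcongr)
    have houtside : #(A \ halfCircle c) ≤ #(A ∩ halfCircle c) + 1 := by
      have := card_inter_le_card_sdiff_add hinj A (H := (halfCircle c)ᶜ) fun v hv => by
        rwa [notMem_compl, antipode_mem_halfCircle_iff hn, ← mem_compl]
      rw [← sdiff_eq_inter_compl, sdiff_compl] at this
      exact this.trans (by gcongr; simp)
    rw [mul_eq_sq_add_div_four hinside houtside, card_inter_add_card_sdiff]
  rw [two_mul_wienerSet_cycleGraphZMod]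
  simp [hcut]

/-! ### Wiener indices of weak maximizers -/

-- Take a rearrangement of `f` with as many monochromatic pairs `{v, σ v}` as possible. If `u` and
-- `v` were unpaired vertices of the same color, exchanging `σ u` and `v` would gain a pair.
lemma exists_perm_card_unpaired_le_one {V α : Type*} [Fintype V] [DecidableEq α] {σ : V → V}
    (hσ : Function.Involutive σ) (f : V → α) :
    ∃ π : Equiv.Perm V, ∀ i, #{v | f (π v) = i ∧ f (π (σ v)) ≠ i} ≤ 1 := by
  classical
  let paired (π : Equiv.Perm V) : Finset V := {v | f (π (σ v)) = f (π v)}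
  obtain ⟨π, hπ⟩ := Finite.exists_max fun π => #(paired π)
  refine ⟨π, fun i => card_le_one.2 fun u hu v hv => by_contra fun huv => ?_⟩
  obtain ⟨-, hui, hσui⟩ := mem_filter.1 hu
  obtain ⟨-, hvi, hσvi⟩ := mem_filter.1 hv
  have hu_ne : u ≠ σ u := fun h => hσui (h ▸ hui)
  let π' : Equiv.Perm V := (Equiv.swap (σ u) v).trans π
  have hπ' {w : V} (hw : w ≠ σ u) (hw' : w ≠ v) : π' w = π w :=
    congrArg π (Equiv.swap_apply_of_ne_of_ne hw hw')
  have hπ'_partner : π' (σ u) = π v := congrArg π (Equiv.swap_apply_left _ _)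
  have hlt : paired π ⊂ paired π' := by
    refine (ssubset_iff_of_subset fun w hw => ?_).2 ⟨u, ?_, ?_⟩
    · have hw : f (π (σ w)) = f (π w) := (mem_filter.1 hw).2
      have hwu : w ≠ u := by rintro rfl; exact hσui (hw.trans hui)
      have hwv : w ≠ v := by rintro rfl; exact hσvi (hw.trans hvi)
      have hwσu : w ≠ σ u := by rintro rfl; exact hσui (hw.symm.trans (by rwa [hσ]))
      have hwσv : w ≠ σ v := by rintro rfl; exact hσvi (hw.symm.trans (by rwa [hσ]))
      have hσwu : σ w ≠ σ u := hσ.injective.ne hwu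
      have hσwv : σ w ≠ v := fun h => hwσv (by rw [← h, hσ])
      exact mem_filter.2 ⟨mem_univ w, by rw [hπ' hσwu hσwv, hπ' hwσu hwv, hw]⟩
    · exact mem_filter.2 ⟨mem_univ u, by rw [hπ'_partner, hπ' hu_ne huv, hui, hvi]⟩
    · exact fun hu' => hσui ((mem_filter.1 hu').2.trans hui)
  exact (card_lt_card hlt).not_ge (hπ π')

section ColorType

variable {V : Type*} [Fintype V] {k : ℕ}

lemma card_colorType (f : V → Fin k) : (colorType f).card = k := by
  simp [colorType]

lemma sum_colorType (f : V → Fin k) : (colorType f).sum = Fintype.card V :=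
  (card_eq_sum_card_fiberwise fun _ _ => mem_coe.2 (mem_univ _)).symm

lemma colorType_comp_perm (f : V → Fin k) (π : Equiv.Perm V) :
    colorType (f ∘ π) = colorType f := by
  refine Multiset.map_congr rfl fun i _ => ?_
  exact card_equiv π fun v => by simp [colorClass]

lemma surjective_iff_forall_mem_colorType_pos (f : V → Fin k) :
    Function.Surjective f ↔ ∀ m ∈ colorType f, 0 < m := by
  simp [colorType, card_pos, Finset.Nonempty, colorClass, Function.Surjective]

lemma exists_coloring_card_colorClass_eq (x : Fin k → ℕ) (hx : ∑ i, x i = Fintype.card V) :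
    ∃ f : V → Fin k, ∀ i, #(colorClass f i) = x i := by
  obtain ⟨e⟩ : Nonempty ((Σ i, Fin (x i)) ≃ V) := Fintype.card_eq.1 (by simpa using hx)
  refine ⟨fun v => (e.symm v).1, fun i => ?_⟩
  have hfiber : {v // (e.symm v).1 = i} ≃ Fin (x i) :=
    (e.symm.subtypeEquiv fun _ => Iff.rfl).trans (Equiv.sigmaSubtype i)
  rw [colorClass, ← Fintype.card_subtype, Fintype.card_congr hfiber, Fintype.card_fin]

lemma exists_colorType_eq {s : Multiset ℕ} (hcard : s.card = k) (hsum : s.sum = Fintype.card V) :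
    ∃ f : V → Fin k, colorType f = s := by
  obtain ⟨l, rfl⟩ := Quot.exists_rep s
  obtain rfl : l.length = k := hcard
  have hofFn : List.ofFn l.get = l := List.ofFn_get l
  obtain ⟨f, hf⟩ := exists_coloring_card_colorClass_eq (V := V) l.get (by
    rw [← List.sum_ofFn, hofFn]
    exact hsum)
  refine ⟨f, ?_⟩
  simp only [colorType, hf, Fin.univ_val_map, hofFn]
  rfl

lemma exists_isWeakMaximizer [DecidableEq V] (G : SimpleGraph V) {f : V → Fin k}
    (hf : Function.Surjective f) :
    ∃ g : V → Fin k, IsWeakMaximizer G g ∧ colorType g = colorType f := by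
  obtain ⟨g, ⟨hg, htype⟩, hmax⟩ := Set.exists_max_image
    {g : V → Fin k | Function.Surjective g ∧ colorType g = colorType f} (wienerColoring G)
    (Set.toFinite _) ⟨f, hf, rfl⟩
  exact ⟨g, ⟨hg, fun g' hg' htype' => hmax g' ⟨hg', htype'.trans htype⟩⟩, htype⟩

/-- The sum of the quarter squares `⌊m² / 4⌋` of the entries `m` of a type. Up to the factor `n / 2`
this is the Wiener index of a weak maximizer on an even cycle `C_n`. -/
def quarterSqSum (s : Multiset ℕ) : ℕ :=
  (s.map fun m => m ^ 2 / 4).sum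

lemma quarterSqSum_colorType (f : V → Fin k) :
    quarterSqSum (colorType f) = ∑ i, #(colorClass f i) ^ 2 / 4 := by
  rw [quarterSqSum, colorType, Multiset.map_map]
  rfl

end ColorType

section WeakMaximizer

variable {n k : ℕ} [NeZero n]

lemma two_mul_wienerColoring_le (f : ZMod n → Fin k) :
    2 * wienerColoring (cycleGraphZMod n) f ≤ n * quarterSqSum (colorType f) := by
  rw [wienerColoring, quarterSqSum_colorType, mul_sum, mul_sum]
  exact sum_le_sum fun i _ => two_mul_wienerSet_cycleGraphZMod_le _

lemma exists_perm_two_mul_wienerColoring_eq (hn : Even n)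
    (f : ZMod n → Fin k) : ∃ π : Equiv.Perm (ZMod n),
      2 * wienerColoring (cycleGraphZMod n) (f ∘ π) = n * quarterSqSum (colorType f) := by
  obtain ⟨π, hπ⟩ := exists_perm_card_unpaired_le_one (antipode_involutive hn) f
  refine ⟨π, ?_⟩
  rw [← colorType_comp_perm f π, wienerColoring, quarterSqSum_colorType, mul_sum, mul_sum]
  refine sum_congr rfl fun i _ => two_mul_wienerSet_eq_of_card_unpaired_le_one hn ?_
  simpa [colorClass, filter_filter] using hπ i

theorem IsWeakMaximizer.two_mul_wienerColoring_eq (hn : Even n)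
    {f : ZMod n → Fin k} (hf : IsWeakMaximizer (cycleGraphZMod n) f) :
    2 * wienerColoring (cycleGraphZMod n) f = n * quarterSqSum (colorType f) := by
  obtain ⟨π, hπ⟩ := exists_perm_two_mul_wienerColoring_eq hn f
  refine (two_mul_wienerColoring_le f).antisymm ?_
  rw [← hπ]
  gcongr
  exact hf.2 _ (hf.1.comp π.surjective) (colorType_comp_perm f π)

lemma IsWeakMaximizer.wienerColoring_le_iff (hn : Even n)
    {f g : ZMod n → Fin k} (hf : IsWeakMaximizer (cycleGraphZMod n) f)
    (hg : IsWeakMaximizer (cycleGraphZMod n) g) :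
    wienerColoring (cycleGraphZMod n) f ≤ wienerColoring (cycleGraphZMod n) g ↔
      quarterSqSum (colorType f) ≤ quarterSqSum (colorType g) := by
  rw [← Nat.mul_le_mul_left_iff two_pos, hf.two_mul_wienerColoring_eq hn,
    hg.two_mul_wienerColoring_eq hn, Nat.mul_le_mul_left_iff (NeZero.pos n)]

end WeakMaximizer

/-! ### Minimizing the sum of quarter squares -/

/-- All entries of `s` are among `2p - 1`, `2p` and `2p + 1`. Such types turn out to be those
minimizing `quarterSqSum`. The difference is an integer one so that `p = 0` needs no exception. -/
def IsNearEven (p : ℕ) (s : Multiset ℕ) : Prop :=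
  ∀ m ∈ s, ((m : ℤ) - 2 * p).natAbs ≤ 1

lemma quarterSq_add_sq (p m : ℕ) :
    m ^ 2 / 4 + p ^ 2 = p * m + ((m : ℤ) - 2 * p).natAbs ^ 2 / 4 := by
  have hsq : ((m : ℤ) - 2 * p) ^ 2 = m ^ 2 + 4 * (p ^ 2 - p * m) := by ring
  zify
  rw [sq_abs, hsq, Int.add_mul_ediv_left _ _ four_ne_zero]
  ring

lemma quarterSqSum_add_card_mul_sq_eq (p : ℕ) (s : Multiset ℕ) :
    quarterSqSum s + s.card * p ^ 2
      = p * s.sum + (s.map fun m : ℕ => ((m : ℤ) - 2 * p).natAbs ^ 2 / 4).sum := by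
  induction s using Multiset.induction_on with
  | empty => simp [quarterSqSum]
  | cons m s ih =>
    simp only [quarterSqSum, Multiset.map_cons, Multiset.sum_cons, Multiset.card_cons] at ih ⊢
    linarith [quarterSq_add_sq p m]

lemma sum_map_natAbs_sq_div_four_eq_zero_iff (p : ℕ) (s : Multiset ℕ) :
    (s.map fun m : ℕ => ((m : ℤ) - 2 * p).natAbs ^ 2 / 4).sum = 0 ↔ IsNearEven p s := by
  have hentry (a : ℕ) : a ^ 2 / 4 = 0 ↔ a ≤ 1 := by
    rw [Nat.div_eq_zero_iff_lt four_pos, show 4 = 2 ^ 2 from rfl,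
      Nat.pow_lt_pow_iff_left two_ne_zero, Nat.lt_succ_iff]
  simp [Multiset.sum_eq_zero_iff, hentry, IsNearEven]

lemma IsNearEven.quarterSqSum_add_card_mul_sq {p : ℕ} {s : Multiset ℕ} (hs : IsNearEven p s) :
    quarterSqSum s + s.card * p ^ 2 = p * s.sum := by
  rw [quarterSqSum_add_card_mul_sq_eq, (sum_map_natAbs_sq_div_four_eq_zero_iff p s).2 hs,
    add_zero]

theorem IsNearEven.quarterSqSum_le {p : ℕ} {s t : Multiset ℕ} (hs : IsNearEven p s)
    (hcard : s.card = t.card) (hsum : s.sum = t.sum) : quarterSqSum s ≤ quarterSqSum t := by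
  have hs' := hs.quarterSqSum_add_card_mul_sq
  have ht' := quarterSqSum_add_card_mul_sq_eq p t
  rw [hcard, hsum] at hs'
  omega

theorem IsNearEven.of_quarterSqSum_le {p : ℕ} {s t : Multiset ℕ} (hs : IsNearEven p s)
    (hcard : s.card = t.card) (hsum : s.sum = t.sum) (hle : quarterSqSum t ≤ quarterSqSum s) :
    IsNearEven p t := by
  have hs' := hs.quarterSqSum_add_card_mul_sq
  have ht' := quarterSqSum_add_card_mul_sq_eq p t
  rw [hcard, hsum] at hs'
  rw [← sum_map_natAbs_sq_div_four_eq_zero_iff]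
  omega

/-! ### Reverse Robin Hood transfers from the equitable type -/

lemma card_equitableType {n k : ℕ} (hk : 0 < k) : (equitableType n k).card = k := by
  simpa [equitableType] using Nat.sub_add_cancel (Nat.mod_lt n hk).le

lemma sum_equitableType {n k : ℕ} (hk : 0 < k) : (equitableType n k).sum = n := by
  have hdecomp := Nat.sub_add_cancel (Nat.mod_lt n hk).le
  simp only [equitableType, Multiset.sum_add, Multiset.sum_replicate, smul_eq_mul]
  calc (k - n % k) * (n / k) + n % k * (n / k + 1)
      = (k - n % k + n % k) * (n / k) + n % k := by ring
    _ = n := by rw [hdecomp, Nat.div_add_mod]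

lemma eq_equitableType_of_forall_mem {q : ℕ} {s : Multiset ℕ} (hs : ∀ m ∈ s, m = q ∨ m = q + 1) :
    s = equitableType s.sum s.card := by
  obtain ⟨a, b, rfl⟩ : ∃ a b, s = Multiset.replicate a q + Multiset.replicate b (q + 1) := by
    refine ⟨s.count q, (s.filter (· ≠ q)).card, ?_⟩
    rw [← Multiset.filter_eq', ← Multiset.eq_replicate_of_mem fun m hm => ?_,
      Multiset.filter_add_not]
    obtain ⟨hm, hne⟩ := Multiset.mem_filter.1 hm
    exact (hs m hm).resolve_left hne
  have hsum : a * q + b * (q + 1) = b + q * (a + b) := by ring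
  simp only [equitableType, Multiset.sum_add, Multiset.sum_replicate, smul_eq_mul,
    Multiset.card_add, Multiset.card_replicate, hsum]
  rcases Nat.eq_zero_or_pos a with rfl | ha
  · rcases Nat.eq_zero_or_pos b with rfl | hb
    · simp
    · simp [Nat.add_mul_div_right _ _ hb, Nat.div_self hb, add_comm]
  · have hb : b < a + b := by omega
    rw [Nat.add_mul_div_right _ _ (by omega), Nat.add_mul_mod_self_right, Nat.mod_eq_of_lt hb,
      Nat.div_eq_of_lt hb]
    simp

lemma isNearEven_equitableType (n k : ℕ) :
    IsNearEven ((n / k + 1) / 2) (equitableType n k) := by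
  intro m hm
  simp only [equitableType, Multiset.mem_add, Multiset.mem_replicate] at hm
  omega

lemma IsNearEven.of_rEstep {p : ℕ} {s t : Multiset ℕ} (hs : IsNearEven p s) (hst : REstep s t) :
    IsNearEven p t := by
  obtain rfl | ⟨m, ⟨r, rfl⟩, hcount, rfl⟩ := hst
  · exact hs
  · have hm := hs _ (Multiset.count_pos.1 (two_pos.trans_le hcount))
    intro y hy
    rcases Multiset.mem_add.1 hy with hy | hy
    · exact hs y (Multiset.mem_of_le tsub_le_self hy)
    · simp only [Multiset.insert_eq_cons, Multiset.mem_cons, Multiset.mem_singleton] at hy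
      omega

lemma rEstep_cons_cons {m : ℕ} (hm : Even m) (r : Multiset ℕ) :
    REstep (m ::ₘ m ::ₘ r) ((m - 1) ::ₘ (m + 1) ::ₘ r) := by
  have hpair : m ::ₘ m ::ₘ r = Multiset.replicate 2 m + r := by simp [Multiset.replicate_succ]
  refine Or.inr ⟨m, hm, by simp, ?_⟩
  rw [hpair, add_tsub_cancel_left, add_comm r, Multiset.insert_eq_cons, Multiset.cons_add,
    Multiset.singleton_add]

lemma IsNearEven.eq_equitableType_or_exists_eq_cons_cons {p : ℕ} {s : Multiset ℕ}
    (hs : IsNearEven p s) :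
    s = equitableType s.sum s.card ∨ 0 < p ∧ ∃ r, s = (2 * p - 1) ::ₘ (2 * p + 1) ::ₘ r := by
  by_cases hhigh : 2 * p + 1 ∈ s
  · by_cases hlow : 0 < p ∧ 2 * p - 1 ∈ s
    · obtain ⟨hp, hlow⟩ := hlow
      obtain ⟨s, rfl⟩ := Multiset.exists_cons_of_mem hlow
      obtain ⟨r, rfl⟩ := Multiset.exists_cons_of_mem
        ((Multiset.mem_cons.1 hhigh).resolve_left (by omega))
      exact .inr ⟨hp, r, rfl⟩
    · refine .inl (eq_equitableType_of_forall_mem (q := 2 * p) fun m hm => ?_)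
      have hne : 0 < p → m ≠ 2 * p - 1 := by
        rintro hp rfl
        exact hlow ⟨hp, hm⟩
      have := hs m hm
      omega
  · refine .inl (eq_equitableType_of_forall_mem (q := 2 * p - 1) fun m hm => ?_)
    have hne : m ≠ 2 * p + 1 := by
      rintro rfl
      exact hhigh hm
    have := hs m hm
    omega

-- Undoing a transfer at `2p` lowers the number of entries `2p + 1`, so this ends at `t(n,k)`.
lemma IsNearEven.inRInfty {p : ℕ} {s : Multiset ℕ} (hs : IsNearEven p s) :
    InRInfty s.sum s.card s := by
  induction hc : s.count (2 * p + 1) using Nat.strong_induction_on generalizing s with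
  | _ c ih =>
    obtain heq | ⟨hp, r, rfl⟩ := hs.eq_equitableType_or_exists_eq_cons_cons
    · rw [InRInfty, ← heq]
    · have hprev : IsNearEven p (2 * p ::ₘ 2 * p ::ₘ r) := by
        simp only [IsNearEven, Multiset.forall_mem_cons] at hs ⊢
        exact ⟨by simp, by simp, hs.2.2⟩
      have hcount : (2 * p ::ₘ 2 * p ::ₘ r).count (2 * p + 1) < c := by
        rw [← hc, Multiset.count_cons_of_ne (by omega), Multiset.count_cons_of_ne (by omega),
          Multiset.count_cons_of_ne (by omega), Multiset.count_cons_self]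
        exact Nat.lt_succ_self _
      have hsum : (2 * p ::ₘ 2 * p ::ₘ r).sum = ((2 * p - 1) ::ₘ (2 * p + 1) ::ₘ r).sum := by
        simp only [Multiset.sum_cons]
        omega
      have hreach := ih _ hcount hprev rfl
      rw [hsum, Multiset.card_cons, Multiset.card_cons] at hreach
      rw [Multiset.card_cons, Multiset.card_cons]
      exact hreach.tail (rEstep_cons_cons (even_two_mul p) r)

theorem inRInfty_iff_exists_isNearEven {n k : ℕ} {s : Multiset ℕ} (hcard : s.card = k)
    (hsum : s.sum = n) : InRInfty n k s ↔ ∃ p, IsNearEven p s := by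
  refine ⟨fun hs => ⟨(n / k + 1) / 2, ?_⟩, ?_⟩
  · clear hcard hsum
    induction hs with
    | refl => exact isNearEven_equitableType n k
    | tail _ hst ih => exact ih.of_rEstep hst
  · rintro ⟨p, hp⟩
    rw [← hcard, ← hsum]
    exact hp.inRInfty

lemma exists_isWeakMaximizer_colorType_eq_equitableType {V : Type*} [Fintype V] [DecidableEq V]
    {k : ℕ} (G : SimpleGraph V) (hk : 0 < k) (hkV : k ≤ Fintype.card V) :
    ∃ e : V → Fin k, IsWeakMaximizer G e ∧ colorType e = equitableType (Fintype.card V) k := by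
  obtain ⟨e, he⟩ := exists_colorType_eq (card_equitableType (n := Fintype.card V) hk)
    (sum_equitableType hk)
  have hsurj : Function.Surjective e := by
    rw [surjective_iff_forall_mem_colorType_pos, he]
    intro m hm
    have hdiv : 0 < Fintype.card V / k := Nat.div_pos hkV hk
    simp only [equitableType, Multiset.mem_add, Multiset.mem_replicate] at hm
    omega
  simpa only [he] using exists_isWeakMaximizer G hsurj

/-- For `2 ≤ k ≤ n` with `n` even and `f` a `k`-color weak maximizer of `W` on `C_n`:
`W(f)` is minimal among `k`-color weak maximizers iff `type(f) ∈ R^∞({t(n,k)})`. -/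
theorem cycle_min_even (n k : ℕ) [NeZero n] (hk : 2 ≤ k) (hkn : k ≤ n) (hn : Even n)
    (f : ZMod n → Fin k) (hf : IsWeakMaximizer (cycleGraphZMod n) f) :
    (∀ g : ZMod n → Fin k, IsWeakMaximizer (cycleGraphZMod n) g →
        wienerColoring (cycleGraphZMod n) f ≤ wienerColoring (cycleGraphZMod n) g)
      ↔ InRInfty n k (colorType f) := by
  have hcard (g : ZMod n → Fin k) : (colorType g).card = (colorType f).card := by
    rw [card_colorType, card_colorType]
  have hsum (g : ZMod n → Fin k) : (colorType g).sum = (colorType f).sum := by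
    rw [sum_colorType, sum_colorType]
  rw [inRInfty_iff_exists_isNearEven (card_colorType f) ((sum_colorType f).trans (ZMod.card n))]
  constructor
  · intro hmin
    obtain ⟨e, he, htype⟩ := exists_isWeakMaximizer_colorType_eq_equitableType
      (cycleGraphZMod n) (two_pos.trans_le hk) (by rwa [ZMod.card])
    have hnear := isNearEven_equitableType (Fintype.card (ZMod n)) k
    rw [← htype] at hnear
    exact ⟨_, hnear.of_quarterSqSum_le (hcard e) (hsum e)
      ((hf.wienerColoring_le_iff hn he).1 (hmin e he))⟩
  · rintro ⟨p, hp⟩ g hg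
    exact (hf.wienerColoring_le_iff hn hg).2 (hp.quarterSqSum_le (hcard g).symm (hsum g).symm)
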